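/- (Overshoot control, frequentist version of Theorem 1.) Let τ > 0 and A > 1 + τ, and set α = f_o(A,τ). Then α > 0 and for every square-summable θ : ℕ → ℝ and every integer n ≥ 1: P_θ({x ∈ ℝ^ℕ : there exists d ≥ d_τ(θ) + n with crit_A(x,d) ≤ crit_A(x,d_τ(θ))}) ≤ e^{−αn} / (1 − e^{−α}). -/

import Mathlib

open MeasureTheory ProbabilityTheory

noncomputable section

/-- Tail sum `∑_{i>d} θ_i²` (indices `i = 1,2,…`). -/
def tailSum (θ : ℕ → ℝ) (d : ℕ) : ℝ := ∑' i : ℕ, if d < i then θ i ^ 2 else 0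

/-- The τ-quantization error `r_τ(d,θ) = ∑_{i>d} θ_i² + τ d ε²`. -/
def rErr (ε τ : ℝ) (θ : ℕ → ℝ) (d : ℕ) : ℝ := tailSum θ d + τ * d * ε ^ 2

/-- The local effective τ-dimension: the smallest `d ≥ 1` minimizing `r_τ(·,θ)` over `d ≥ 1`. -/
def effDim (ε τ : ℝ) (θ : ℕ → ℝ) : ℕ :=
  sInf {d : ℕ | 1 ≤ d ∧ ∀ d' : ℕ, 1 ≤ d' → rErr ε τ θ d ≤ rErr ε τ θ d'}

/-- The penalized criterion `crit_A(x,d) = -∑_{i=1}^d x_i² + A ε² d`. -/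
def critF (ε A : ℝ) (x : ℕ → ℝ) (d : ℕ) : ℝ :=
  -(∑ i ∈ Finset.Icc 1 d, x i ^ 2) + A * ε ^ 2 * d

/-- `f(h,a,t) = (1/2)(a h + log(1-h) - t h/(1-h))`. -/
def fFun (h a t : ℝ) : ℝ := (a * h + Real.log (1 - h) - t * h / (1 - h)) / 2

/-- `g(h,a,t) = f(-h,a,t)`. -/
def gFun (h a t : ℝ) : ℝ := fFun (-h) a t

/-- `f_o(a,t) = sup_{h ∈ [0,1)} f(h,a,t)`. -/
def fSup (a t : ℝ) : ℝ := sSup ((fun h => fFun h a t) '' Set.Ico 0 1)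

/-- `g_o(a,t) = sup_{h ∈ [0,1]} g(h,a,t)`. -/
def gSup (a t : ℝ) : ℝ := sSup ((fun h => gFun h a t) '' Set.Icc 0 1)

/-- `P` is the infinite product measure `⨂_{i≥1} N(θ_i, ε²)` on the sequence space `ℝ^ℕ`,
characterized by being a probability measure whose finite-dimensional projections onto
the coordinates `1,…,n` are the corresponding finite products of Gaussians. -/
def IsGaussianProduct (ε : ℝ) (θ : ℕ → ℝ) (P : Measure (ℕ → ℝ)) : Prop :=
  IsProbabilityMeasure P ∧
  ∀ n : ℕ, P.map (fun x (i : Fin n) => x ((i : ℕ) + 1)) =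
    Measure.pi fun i : Fin n => gaussianReal (θ ((i : ℕ) + 1)) ((ε ^ 2).toNNReal)

/-!
By minimality of `D = d_τ(θ)`, the block `θ_{D+1}, …, θ_{D+m}` satisfies `∑ θ_i² ≤ τ m ε²`: adding
`m` coordinates cannot lower the quantization error. On the other hand `crit_A(x, D + m) ≤
crit_A(x, D)` says exactly that `∑ x_i² ≥ A m ε²` over the same block. Since `A` exceeds `1 + τ`,
the latter is a large deviation of a noncentral chi-square variable. Its cumulant generating
function is explicit, and Chernoff's bound with parameter `h / (2 ε²)` gives probability at most
`exp (-m f(h, A, τ))`; optimizing over `h ∈ [0, 1)` replaces `f` by `f_o(A, τ)`, which is positive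
because `f(·, A, τ)` vanishes at `0` with slope `(A - 1 - τ) / 2`. A union bound over `m ≥ n` then
sums a geometric series.
-/

section FSup

variable {a t h : ℝ}

lemma le_fFun (hh : h < 1) : h / (1 - h) * (a * (1 - h) - (1 + t)) / 2 ≤ fFun h a t := by
  have h1 : 0 < 1 - h := sub_pos.2 hh
  have hlog : 1 - (1 - h)⁻¹ ≤ Real.log (1 - h) := Real.one_sub_inv_le_log_of_pos h1
  have hlin : h / (1 - h) * (a * (1 - h) - (1 + t)) =
      a * h + (1 - (1 - h)⁻¹) - t * h / (1 - h) := by field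
  rw [hlin, fFun]
  gcongr

lemma fFun_le (ht : 0 ≤ t) (hh : h ∈ Set.Ico 0 1) : fFun h a t ≤ |a| / 2 := by
  have hh1 : 0 < 1 - h := sub_pos.2 hh.2
  have hlog : Real.log (1 - h) ≤ 0 := Real.log_nonpos hh1.le (by linarith [hh.1])
  have hquot : 0 ≤ t * h / (1 - h) := div_nonneg (mul_nonneg ht hh.1) hh1.le
  have hlin : a * h ≤ |a| :=
    (mul_le_mul_of_nonneg_right (le_abs_self a) hh.1).trans
      (mul_le_of_le_one_right (abs_nonneg a) hh.2.le)
  rw [fFun]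
  linarith

lemma bddAbove_image_fFun (ht : 0 ≤ t) : BddAbove ((fun h => fFun h a t) '' Set.Ico 0 1) :=
  ⟨|a| / 2, Set.forall_mem_image.2 fun _ => fFun_le ht⟩

lemma nonempty_image_fFun : ((fun h => fFun h a t) '' Set.Ico 0 1).Nonempty :=
  (Set.nonempty_Ico.2 one_pos).image _

lemma fSup_pos (ht : 0 ≤ t) (hat : 1 + t < a) : 0 < fSup a t := by
  have ha : 0 < a := by linarith
  obtain ⟨h, h0, h_lt⟩ : ∃ h, 0 < h ∧ h < 1 - (1 + t) / a :=
    exists_between (sub_pos.2 ((div_lt_one ha).2 hat))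
  have h1 : h < 1 := h_lt.trans (sub_lt_self 1 (by positivity))
  have hgap : 1 + t < a * (1 - h) := (div_lt_iff₀' ha).1 (by linarith)
  calc 0 < h / (1 - h) * (a * (1 - h) - (1 + t)) / 2 :=
        half_pos (mul_pos (div_pos h0 (sub_pos.2 h1)) (sub_pos.2 hgap))
    _ ≤ fFun h a t := le_fFun h1
    _ ≤ fSup a t := le_csSup (bddAbove_image_fFun ht) (Set.mem_image_of_mem _ ⟨h0.le, h1⟩)

lemma le_exp_neg_mul_fSup {p c : ℝ} (ht : 0 ≤ t) (hc : 0 ≤ c)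
    (hp : ∀ h ∈ Set.Ico 0 1, p ≤ Real.exp (-(c * fFun h a t))) :
    p ≤ Real.exp (-(c * fSup a t)) := by
  have hanti : Antitone fun y => Real.exp (-(c * y)) := fun _ _ hxy => by
    dsimp only
    gcongr
  rw [fSup, hanti.map_csSup_of_continuousAt (by fun_prop) nonempty_image_fFun
    (bddAbove_image_fFun ht)]
  refine le_csInf (nonempty_image_fFun.image _) ?_
  simpa only [Set.forall_mem_image] using hp

end FSup

section ChiSquare

open scoped NNReal

-- Completing the square: the exponential tilt of a Gaussian density is again Gaussian.
lemma exp_mul_sq_mul_gaussianPDFReal {m t : ℝ} {v : ℝ≥0} (hv : v ≠ 0) (ht : 2 * t * v < 1)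
    (y : ℝ) :
    Real.exp (t * y ^ 2) * gaussianPDFReal m v y =
      Real.exp (t * m ^ 2 / (1 - 2 * t * v) - Real.log (1 - 2 * t * v) / 2) *
        gaussianPDFReal (m / (1 - 2 * t * v)) (v / (1 - 2 * t * v).toNNReal) y := by
  have hs : 0 < 1 - 2 * t * v := sub_pos.2 ht
  have hnorm : (√(2 * Real.pi * (v / (1 - 2 * t * v))))⁻¹ =
      (√(2 * Real.pi * v))⁻¹ * Real.exp (Real.log (1 - 2 * t * v) / 2) := by
    rw [← mul_div_assoc, Real.sqrt_div (by positivity), inv_div, div_eq_inv_mul,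
      ← Real.log_sqrt hs.le, Real.exp_log (Real.sqrt_pos.2 hs)]
  have hexp : t * y ^ 2 + -(y - m) ^ 2 / (2 * v) =
      t * m ^ 2 / (1 - 2 * t * v) +
        -(y - m / (1 - 2 * t * v)) ^ 2 / (2 * (v / (1 - 2 * t * v))) := by
    have hv' : (v : ℝ) ≠ 0 := NNReal.coe_ne_zero.2 hv
    have hs' := hs.ne'
    generalize hgen : 1 - 2 * t * v = s at hs'
    obtain rfl : t = (1 - s) / (2 * v) := by rw [← hgen]; field
    field
  simp only [gaussianPDFReal, NNReal.coe_div, Real.coe_toNNReal _ hs.le]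
  rw [hnorm, mul_left_comm, ← Real.exp_add, hexp, Real.exp_add, Real.exp_sub]
  field

variable {m t : ℝ} {v : ℝ≥0}

lemma integrable_exp_mul_sq_gaussianReal (ht : 2 * t * v < 1) :
    Integrable (fun y => Real.exp (t * y ^ 2)) (gaussianReal m v) := by
  rcases eq_or_ne v 0 with rfl | hv
  · rw [gaussianReal_zero_var]
    exact integrable_dirac (by simp)
  rw [gaussianReal_of_var_ne_zero _ hv,
    integrable_withDensity_iff_integrable_smul₀' (by fun_prop) (by simp [gaussianPDF])]
  simpa only [toReal_gaussianPDF, smul_eq_mul, mul_comm (gaussianPDFReal m v _),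
    exp_mul_sq_mul_gaussianPDFReal hv ht] using (integrable_gaussianPDFReal _ _).const_mul _

lemma cgf_sq_gaussianReal (ht : 2 * t * v < 1) :
    cgf (fun y => y ^ 2) (gaussianReal m v) t =
      t * m ^ 2 / (1 - 2 * t * v) - Real.log (1 - 2 * t * v) / 2 := by
  rcases eq_or_ne v 0 with rfl | hv
  · simp [cgf, mgf]
  have hv' : v / (1 - 2 * t * v).toNNReal ≠ 0 :=
    div_ne_zero hv (Real.toNNReal_pos.2 (sub_pos.2 ht)).ne'
  simp only [cgf, mgf, integral_gaussianReal_eq_integral_smul hv, smul_eq_mul,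
    mul_comm (gaussianPDFReal m v _), exp_mul_sq_mul_gaussianPDFReal hv ht]
  rw [integral_const_mul, integral_gaussianPDFReal_eq_one _ hv', mul_one, Real.log_exp]

variable {Ω : Type*} {mΩ : MeasurableSpace Ω} {P : Measure Ω} {Y : Ω → ℝ}

lemma integrable_exp_mul_sq_of_hasLaw_gaussianReal (hY : HasLaw Y (gaussianReal m v) P)
    (ht : 2 * t * v < 1) :
    Integrable (fun ω => Real.exp (t * Y ω ^ 2)) P := by
  have hmap := integrable_exp_mul_sq_gaussianReal (m := m) ht
  rw [← hY.map_eq] at hmap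
  exact hmap.comp_aemeasurable hY.aemeasurable

lemma cgf_sq_of_hasLaw_gaussianReal (hY : HasLaw Y (gaussianReal m v) P)
    (ht : 2 * t * v < 1) :
    cgf (fun ω => Y ω ^ 2) P t =
      t * m ^ 2 / (1 - 2 * t * v) - Real.log (1 - 2 * t * v) / 2 := by
  rw [← cgf_sq_gaussianReal ht, cgf, cgf, ← hY.map_eq, mgf_map hY.aemeasurable (by fun_prop)]
  rfl

end ChiSquare

section Chernoff

open scoped NNReal

variable {ι Ω : Type*} {mΩ : MeasurableSpace Ω} {P : Measure Ω} {m : ι → ℝ} {v : ℝ≥0}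
  {X : ι → Ω → ℝ} {a h t : ℝ}

lemma measureReal_sum_sq_ge_le_exp (hm : ∀ i, Measurable (X i))
    (hlaw : ∀ i, HasLaw (X i) (gaussianReal (m i) v) P) (hind : iIndepFun X P) (s : Finset ι)
    (c : ℝ) (h0 : 0 ≤ t) (h1 : 2 * t * v < 1) :
    P.real {ω | c ≤ ∑ i ∈ s, X i ω ^ 2} ≤
      Real.exp (-t * c + ∑ i ∈ s,
        (t * m i ^ 2 / (1 - 2 * t * v) - Real.log (1 - 2 * t * v) / 2)) := by
  have := hind.isProbabilityMeasure
  have hind_sq : iIndepFun (fun i ω => X i ω ^ 2) P :=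
    hind.comp (fun _ y => y ^ 2) fun _ => by fun_prop
  have hm_sq : ∀ i, Measurable fun ω => X i ω ^ 2 := fun i => (hm i).pow_const 2
  have hint : ∀ i ∈ s, Integrable (fun ω => Real.exp (t * X i ω ^ 2)) P :=
    fun i _ => integrable_exp_mul_sq_of_hasLaw_gaussianReal (hlaw i) h1
  have hchernoff :=
    measure_ge_le_exp_cgf c h0 (hind_sq.integrable_exp_mul_sum hm_sq hint)
  simpa only [hind_sq.cgf_sum hm_sq hint, cgf_sq_of_hasLaw_gaussianReal (hlaw _) h1,
    Finset.sum_apply] using hchernoff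

lemma measureReal_sum_sq_ge_le_exp_fFun (hv : v ≠ 0) (hm : ∀ i, Measurable (X i))
    (hlaw : ∀ i, HasLaw (X i) (gaussianReal (m i) v) P) (hind : iIndepFun X P) (s : Finset ι)
    (hs : ∑ i ∈ s, m i ^ 2 ≤ t * v * s.card) (hh : h ∈ Set.Ico 0 1) :
    P.real {ω | a * v * s.card ≤ ∑ i ∈ s, X i ω ^ 2} ≤ Real.exp (-(s.card * fFun h a t)) := by
  have hv' : (v : ℝ) ≠ 0 := NNReal.coe_ne_zero.2 hv
  have hh1 : 0 < 1 - h := sub_pos.2 hh.2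
  have hh0 : 0 ≤ h := hh.1
  have htilt : 2 * (h / (2 * v)) * v = h := by field
  refine (measureReal_sum_sq_ge_le_exp hm hlaw hind s _
    (by positivity) (htilt.trans_lt hh.2)).trans (Real.exp_le_exp.2 ?_)
  rw [htilt, Finset.sum_sub_distrib, ← Finset.sum_div, ← Finset.mul_sum, Finset.sum_const,
    nsmul_eq_mul]
  calc _ ≤ -(h / (2 * v)) * (a * v * s.card) + (h / (2 * v) * (t * v * s.card) / (1 - h) -
          s.card * (Real.log (1 - h) / 2)) := by gcongr
    _ = -(s.card * fFun h a t) := by rw [fFun]; field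

lemma measureReal_sum_sq_ge_le_exp_fSup (hv : v ≠ 0) (hm : ∀ i, Measurable (X i))
    (hlaw : ∀ i, HasLaw (X i) (gaussianReal (m i) v) P) (hind : iIndepFun X P) (s : Finset ι)
    (ht : 0 ≤ t) (hs : ∑ i ∈ s, m i ^ 2 ≤ t * v * s.card) :
    P.real {ω | a * v * s.card ≤ ∑ i ∈ s, X i ω ^ 2} ≤ Real.exp (-(s.card * fSup a t)) :=
  le_exp_neg_mul_fSup ht s.card.cast_nonneg fun _ =>
    measureReal_sum_sq_ge_le_exp_fFun hv hm hlaw hind s hs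

end Chernoff

namespace IsGaussianProduct

variable {ε : ℝ} {θ : ℕ → ℝ} {P : Measure (ℕ → ℝ)}

lemma hasLaw_restrict (hP : IsGaussianProduct ε θ P) (n : ℕ) :
    HasLaw (fun x (i : Fin n) => x ((i : ℕ) + 1))
      (Measure.pi fun i : Fin n => gaussianReal (θ ((i : ℕ) + 1)) (ε ^ 2).toNNReal) P where
  aemeasurable := Measurable.aemeasurable (by fun_prop)
  map_eq := hP.2 n

lemma hasLaw_eval (hP : IsGaussianProduct ε θ P) (i : ℕ) :
    HasLaw (fun x : ℕ → ℝ => x (i + 1)) (gaussianReal (θ (i + 1)) (ε ^ 2).toNNReal) P :=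
  (measurePreserving_eval _ (Fin.last i)).fun_comp_hasLaw (hP.hasLaw_restrict (i + 1))

lemma iIndepFun_eval (hP : IsGaussianProduct ε θ P) :
    iIndepFun (fun i (x : ℕ → ℝ) => x (i + 1)) P := by
  have := hP.1
  have hfin (n : ℕ) : iIndepFun (fun (i : Fin n) (x : ℕ → ℝ) => x ((i : ℕ) + 1)) P :=
    (iIndepFun_iff_hasLaw_pi_pi fun i : Fin n => hP.hasLaw_eval i).2 (hP.hasLaw_restrict n)
  refine iIndepFun_iff_finset.2 fun s => ?_
  let toFin (i : s) : Fin (s.sup id + 1) := ⟨i, Nat.lt_succ_of_le (Finset.le_sup (f := id) i.2)⟩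
  have htoFin : Function.Injective toFin := fun i j hij => Subtype.ext (congrArg Fin.val hij)
  exact (hfin _).precomp (g := toFin) htoFin

end IsGaussianProduct

section EffectiveDimension

open Filter

variable {ε τ : ℝ} {θ : ℕ → ℝ}

lemma tailSum_nonneg (θ : ℕ → ℝ) (d : ℕ) : 0 ≤ tailSum θ d :=
  tsum_nonneg fun i => by split_ifs <;> positivity

lemma tailSum_eq_tsum_add (θ : ℕ → ℝ) (d : ℕ) : tailSum θ d = ∑' i, θ (d + i + 1) ^ 2 := by
  have hinj : Function.Injective fun i => d + i + 1 := fun i j hij => by simpa using hij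
  have hsupp : Function.support (fun i => if d < i then θ i ^ 2 else 0) ⊆
      Set.range fun i => d + i + 1 := fun i hi => by
    obtain ⟨k, rfl⟩ := Nat.exists_eq_add_of_lt (ite_ne_right_iff.1 hi).1
    exact ⟨k, rfl⟩
  rw [tailSum, ← hinj.tsum_eq hsupp]
  exact tsum_congr fun i => if_pos (by lia)

lemma sum_add_tailSum (hθ : Summable fun i => θ i ^ 2) (d m : ℕ) :
    ∑ j ∈ Finset.range m, θ (d + j + 1) ^ 2 + tailSum θ (d + m) = tailSum θ d := by
  have hshift : Summable fun i => θ (d + i + 1) ^ 2 :=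
    ((summable_nat_add_iff (d + 1)).2 hθ).congr fun i => by ring_nf
  have hindex (i : ℕ) : d + m + i + 1 = d + (i + m) + 1 := by ring
  simp only [tailSum_eq_tsum_add, hindex, hshift.sum_add_tsum_nat_add m]

lemma tendsto_rErr_atTop (hε : ε ≠ 0) (hτ : 0 < τ) (θ : ℕ → ℝ) :
    Tendsto (rErr ε τ θ) atTop atTop := by
  have hlin : Tendsto (fun d : ℕ => τ * d * ε ^ 2) atTop atTop :=
    (tendsto_natCast_atTop_atTop.const_mul_atTop hτ).atTop_mul_const (by positivity)
  exact tendsto_atTop_mono (fun d => le_add_of_nonneg_left (tailSum_nonneg θ d)) hlin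

lemma effDim_spec (hε : ε ≠ 0) (hτ : 0 < τ) (θ : ℕ → ℝ) :
    1 ≤ effDim ε τ θ ∧ ∀ d, 1 ≤ d → rErr ε τ θ (effDim ε τ θ) ≤ rErr ε τ θ d := by
  have htendsto : Tendsto (fun d => rErr ε τ θ (d + 1)) cofinite atTop := by
    rw [Nat.cofinite_eq_atTop]
    exact (tendsto_rErr_atTop hε hτ θ).comp (tendsto_add_atTop_nat 1)
  obtain ⟨d₀, hd₀⟩ := htendsto.exists_forall_le
  refine Nat.sInf_mem (s := {d | 1 ≤ d ∧ ∀ d', 1 ≤ d' → rErr ε τ θ d ≤ rErr ε τ θ d'})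
    ⟨d₀ + 1, by lia, fun d hd => ?_⟩
  obtain ⟨k, rfl⟩ := Nat.exists_eq_add_of_le' hd
  exact hd₀ k

lemma sum_sq_effDim_le (hε : ε ≠ 0) (hτ : 0 < τ) (hθ : Summable fun i => θ i ^ 2) (m : ℕ) :
    ∑ j ∈ Finset.range m, θ (effDim ε τ θ + j + 1) ^ 2 ≤ τ * ε ^ 2 * m := by
  obtain ⟨hone, hmin⟩ := effDim_spec hε hτ θ
  have hle := hmin (effDim ε τ θ + m) (by lia)
  rw [rErr, rErr, ← sum_add_tailSum hθ _ m] at hle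
  push_cast at hle
  linarith

end EffectiveDimension

section Overshoot

lemma critF_add (ε A : ℝ) (x : ℕ → ℝ) (d m : ℕ) :
    critF ε A x (d + m) =
      critF ε A x d + (A * ε ^ 2 * m - ∑ j ∈ Finset.range m, x (d + j + 1) ^ 2) := by
  induction m with
  | zero => simp
  | succ m ih =>
    rw [Finset.sum_range_succ, ← sub_sub, Nat.cast_succ, mul_add, mul_one]
    rw [critF] at ih ⊢
    rw [← add_assoc, Finset.sum_Icc_succ_top (by lia), Nat.cast_succ]
    linarith

lemma critF_add_le_critF_iff {ε A : ℝ} {x : ℕ → ℝ} {d m : ℕ} :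
    critF ε A x (d + m) ≤ critF ε A x d ↔
      A * ε ^ 2 * m ≤ ∑ j ∈ Finset.range m, x (d + j + 1) ^ 2 := by
  rw [critF_add, add_le_iff_nonpos_right, sub_nonpos]

lemma IsGaussianProduct.measureReal_critF_effDim_add_le {ε τ : ℝ} {θ : ℕ → ℝ}
    {P : Measure (ℕ → ℝ)} (hP : IsGaussianProduct ε θ P) (hε : ε ≠ 0) (hτ : 0 < τ)
    (hθ : Summable fun i => θ i ^ 2) (A : ℝ) (m : ℕ) :
    P.real {x | critF ε A x (effDim ε τ θ + m) ≤ critF ε A x (effDim ε τ θ)} ≤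
      Real.exp (-(m * fSup A τ)) := by
  have hv : (ε ^ 2).toNNReal ≠ 0 := (Real.toNNReal_pos.2 (by positivity)).ne'
  have hind := hP.iIndepFun_eval.precomp (add_right_injective (effDim ε τ θ))
  simpa only [critF_add_le_critF_iff, Finset.card_range, Real.coe_toNNReal _ (sq_nonneg ε)] using
    measureReal_sum_sq_ge_le_exp_fSup (a := A) hv (fun _ => by fun_prop)
      (fun j => hP.hasLaw_eval (effDim ε τ θ + j)) hind (Finset.range m) hτ.le
      (by simpa only [Finset.card_range, Real.coe_toNNReal _ (sq_nonneg ε)] using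
        sum_sq_effDim_le hε hτ hθ m)

lemma measure_iUnion_le_of_measureReal_le_exp {Ω : Type*} {mΩ : MeasurableSpace Ω}
    {μ : Measure Ω} [IsFiniteMeasure μ] {E : ℕ → Set Ω} {α c : ℝ} (hα : 0 < α)
    (hE : ∀ k : ℕ, μ.real (E k) ≤ Real.exp (-((c + k) * α))) :
    μ (⋃ k, E k) ≤ ENNReal.ofReal (Real.exp (-α * c) / (1 - Real.exp (-α))) := by
  have hratio : Real.exp (-α) < 1 := Real.exp_lt_one_iff.2 (neg_neg_of_pos hα)
  have hgeom : HasSum (fun k : ℕ => Real.exp (-((c + k) * α)))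
      (Real.exp (-α * c) / (1 - Real.exp (-α))) := by
    have hterm (k : ℕ) :
        Real.exp (-((c + k) * α)) = Real.exp (-α * c) * Real.exp (-α) ^ k := by
      rw [← Real.exp_nat_mul, ← Real.exp_add]
      ring_nf
    simpa only [hterm, div_eq_mul_inv] using
      (hasSum_geometric_of_lt_one (Real.exp_nonneg _) hratio).mul_left _
  calc μ (⋃ k, E k) ≤ ∑' k, μ (E k) := measure_iUnion_le E
    _ ≤ ∑' k : ℕ, ENNReal.ofReal (Real.exp (-((c + k) * α))) :=
        ENNReal.tsum_le_tsum fun k =>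
          (ENNReal.le_ofReal_iff_toReal_le (measure_ne_top μ _) (Real.exp_nonneg _)).2 (hE k)
    _ = ENNReal.ofReal (Real.exp (-α * c) / (1 - Real.exp (-α))) := by
        rw [← hgeom.tsum_eq, ENNReal.ofReal_tsum_of_nonneg (fun _ => Real.exp_nonneg _)
          hgeom.summable]

end Overshoot

theorem stmt10 (ε τ A : ℝ) (hε : 0 < ε) (hτ : 0 < τ) (hA : 1 + τ < A) :
    0 < fSup A τ ∧
    ∀ θ : ℕ → ℝ, Summable (fun i => θ i ^ 2) →
    ∀ n : ℕ, 1 ≤ n →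
    ∀ P : Measure (ℕ → ℝ), IsGaussianProduct ε θ P →
    P {x | ∃ d : ℕ, effDim ε τ θ + n ≤ d ∧
        critF ε A x d ≤ critF ε A x (effDim ε τ θ)} ≤
      ENNReal.ofReal (Real.exp (-(fSup A τ) * n) / (1 - Real.exp (-(fSup A τ)))) := by
  have hα : 0 < fSup A τ := fSup_pos hτ.le hA
  refine ⟨hα, fun θ hθ n _ P hP => ?_⟩
  have := hP.1
  have hcover : {x | ∃ d : ℕ, effDim ε τ θ + n ≤ d ∧
      critF ε A x d ≤ critF ε A x (effDim ε τ θ)} ⊆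
      ⋃ k, {x | critF ε A x (effDim ε τ θ + (n + k)) ≤ critF ε A x (effDim ε τ θ)} := by
    rintro x ⟨d, hd, hx⟩
    obtain ⟨k, rfl⟩ := Nat.exists_eq_add_of_le hd
    exact Set.mem_iUnion.2 ⟨k, by rwa [add_assoc] at hx⟩
  refine (measure_mono hcover).trans (measure_iUnion_le_of_measureReal_le_exp hα fun k => ?_)
  exact_mod_cast hP.measureReal_critF_effDim_add_le hε.ne' hτ hθ A (n + k)
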